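/- For every joint distribution P on 𝒳 × 𝒴 × 𝒵: S̃I(X:Y;Z) ≤ MI_P(X:Y), C̃I(X:Y;Z) ≤ MI_P(X:Y|Z), and ŨI(X:Y∖Z) ≥ MI_P(X:Y) − MI_P(X:Z). -/

import Mathlib

/-!
For `Q ≥ 0` the two chain rules
`MI(X:(Y,Z)) = MI(X:Z) + MI(X:Y|Z) = MI(X:Y) + MI(X:Z|Y)` hold (`miXYZ_eq`, `miXYZ_eq'`), and
conditional mutual information is nonnegative (`miXY_Z_nonneg`, from `log t ≥ 1 - 1/t`).
Both `MI(X:Y)` and `MI(X:Z)` depend only on pair marginals fixed on `Δ_P`, so they are constant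
there. Hence on `Δ_P` one has `CoI_Q ≤ MI_P(X:Y)`, `MI_Q(X:(Y,Z)) ≥ MI_P(X:Z)` and
`MI_Q(X:Y|Z) ≥ MI_P(X:Y) - MI_P(X:Z)`. As `P ∈ Δ_P`, these bounds pass to the supremum and the
infima, without using that the optima are attained.
-/

open scoped BigOperators
open Real

namespace PID

variable {𝒳 𝒴 𝒵 : Type*} [Fintype 𝒳] [Fintype 𝒴] [Fintype 𝒵]

/-- A joint distribution on `𝒳 × 𝒴 × 𝒵`: nonnegative values summing to 1. -/
def IsDist (P : 𝒳 × 𝒴 × 𝒵 → ℝ) : Prop :=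
  (∀ p, 0 ≤ P p) ∧ ∑ p, P p = 1

noncomputable def margX (P : 𝒳 × 𝒴 × 𝒵 → ℝ) (x : 𝒳) : ℝ := ∑ y, ∑ z, P (x, y, z)
noncomputable def margY (P : 𝒳 × 𝒴 × 𝒵 → ℝ) (y : 𝒴) : ℝ := ∑ x, ∑ z, P (x, y, z)
noncomputable def margZ (P : 𝒳 × 𝒴 × 𝒵 → ℝ) (z : 𝒵) : ℝ := ∑ x, ∑ y, P (x, y, z)
noncomputable def margXY (P : 𝒳 × 𝒴 × 𝒵 → ℝ) (x : 𝒳) (y : 𝒴) : ℝ := ∑ z, P (x, y, z)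
noncomputable def margXZ (P : 𝒳 × 𝒴 × 𝒵 → ℝ) (x : 𝒳) (z : 𝒵) : ℝ := ∑ y, P (x, y, z)
noncomputable def margYZ (P : 𝒳 × 𝒴 × 𝒵 → ℝ) (y : 𝒴) (z : 𝒵) : ℝ := ∑ x, P (x, y, z)

/-- Mutual information `MI(X:Y)`. -/
noncomputable def miXY (P : 𝒳 × 𝒴 × 𝒵 → ℝ) : ℝ :=
  ∑ x, ∑ y, margXY P x y * Real.log (margXY P x y / (margX P x * margY P y))

/-- Mutual information `MI(X:Z)`. -/
noncomputable def miXZ (P : 𝒳 × 𝒴 × 𝒵 → ℝ) : ℝ :=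
  ∑ x, ∑ z, margXZ P x z * Real.log (margXZ P x z / (margX P x * margZ P z))

/-- Mutual information `MI(Y:Z)`. -/
noncomputable def miYZ (P : 𝒳 × 𝒴 × 𝒵 → ℝ) : ℝ :=
  ∑ y, ∑ z, margYZ P y z * Real.log (margYZ P y z / (margY P y * margZ P z))

/-- Mutual information `MI(X:(Y,Z))`. -/
noncomputable def miXYZ (P : 𝒳 × 𝒴 × 𝒵 → ℝ) : ℝ :=
  ∑ x, ∑ y, ∑ z, P (x, y, z) * Real.log (P (x, y, z) / (margX P x * margYZ P y z))

/-- Conditional mutual information `MI(X:Y|Z)`. -/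
noncomputable def miXY_Z (P : 𝒳 × 𝒴 × 𝒵 → ℝ) : ℝ :=
  ∑ x, ∑ y, ∑ z, P (x, y, z) *
    Real.log (P (x, y, z) * margZ P z / (margXZ P x z * margYZ P y z))

/-- Conditional mutual information `MI(X:Z|Y)`. -/
noncomputable def miXZ_Y (P : 𝒳 × 𝒴 × 𝒵 → ℝ) : ℝ :=
  ∑ x, ∑ y, ∑ z, P (x, y, z) *
    Real.log (P (x, y, z) * margY P y / (margXY P x y * margYZ P y z))

/-- Conditional mutual information `MI(Y:Z|X)`. -/
noncomputable def miYZ_X (P : 𝒳 × 𝒴 × 𝒵 → ℝ) : ℝ :=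
  ∑ x, ∑ y, ∑ z, P (x, y, z) *
    Real.log (P (x, y, z) * margX P x / (margXY P x y * margXZ P x z))

/-- Conditional entropy `H(X|Y,Z)`. -/
noncomputable def hX_YZ (P : 𝒳 × 𝒴 × 𝒵 → ℝ) : ℝ :=
  -∑ x, ∑ y, ∑ z, P (x, y, z) * Real.log (P (x, y, z) / margYZ P y z)

/-- Conditional entropy `H(X|Z)`. -/
noncomputable def hX_Z (P : 𝒳 × 𝒴 × 𝒵 → ℝ) : ℝ :=
  -∑ x, ∑ z, margXZ P x z * Real.log (margXZ P x z / margZ P z)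

/-- Conditional entropy `H(Y|Z)`. -/
noncomputable def hY_Z (P : 𝒳 × 𝒴 × 𝒵 → ℝ) : ℝ :=
  -∑ y, ∑ z, margYZ P y z * Real.log (margYZ P y z / margZ P z)

/-- Conditional entropy `H(Z|Y)`. -/
noncomputable def hZ_Y (P : 𝒳 × 𝒴 × 𝒵 → ℝ) : ℝ :=
  -∑ y, ∑ z, margYZ P y z * Real.log (margYZ P y z / margY P y)

/-- Co-information `CoI(X;Y;Z) = MI(X:Y) − MI(X:Y|Z)`. -/
noncomputable def coI (P : 𝒳 × 𝒴 × 𝒵 → ℝ) : ℝ := miXY P - miXY_Z P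

/-- `Δ_P`: the joint distributions with the same pair marginals as `P` on `(X,Y)` and `(X,Z)`. -/
def ΔP (P : 𝒳 × 𝒴 × 𝒵 → ℝ) : Set (𝒳 × 𝒴 × 𝒵 → ℝ) :=
  {Q | IsDist Q ∧ (∀ x y, margXY Q x y = margXY P x y) ∧ ∀ x z, margXZ Q x z = margXZ P x z}

/-- `ŨI(X:Y∖Z) = min_{Q ∈ Δ_P} MI_Q(X:Y|Z)`. -/
noncomputable def UIY (P : 𝒳 × 𝒴 × 𝒵 → ℝ) : ℝ := sInf (miXY_Z '' ΔP P)

/-- `ŨI(X:Z∖Y) = min_{Q ∈ Δ_P} MI_Q(X:Z|Y)`. -/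
noncomputable def UIZ (P : 𝒳 × 𝒴 × 𝒵 → ℝ) : ℝ := sInf (miXZ_Y '' ΔP P)

/-- `S̃I(X:Y;Z) = max_{Q ∈ Δ_P} CoI_Q(X;Y;Z)`. -/
noncomputable def SI (P : 𝒳 × 𝒴 × 𝒵 → ℝ) : ℝ := sSup (coI '' ΔP P)

/-- `C̃I(X:Y;Z) = MI_P(X:(Y,Z)) − min_{Q ∈ Δ_P} MI_Q(X:(Y,Z))`. -/
noncomputable def CI (P : 𝒳 × 𝒴 × 𝒵 → ℝ) : ℝ := miXYZ P - sInf (miXYZ '' ΔP P)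

theorem sum_margXZ (Q : 𝒳 × 𝒴 × 𝒵 → ℝ) (z : 𝒵) : ∑ x, margXZ Q x z = margZ Q z := rfl

theorem sum_margYZ (Q : 𝒳 × 𝒴 × 𝒵 → ℝ) (z : 𝒵) : ∑ y, margYZ Q y z = margZ Q z := by
  unfold margYZ margZ
  exact Finset.sum_comm

theorem sum_margXZ' (Q : 𝒳 × 𝒴 × 𝒵 → ℝ) (x : 𝒳) : ∑ z, margXZ Q x z = margX Q x := by
  unfold margXZ margX
  exact Finset.sum_comm

/-- The law of `(X, Z, Y)` when `Q` is the law of `(X, Y, Z)`. -/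
def swapYZ (Q : 𝒳 × 𝒴 × 𝒵 → ℝ) : 𝒳 × 𝒵 × 𝒴 → ℝ := fun p => Q (p.1, p.2.2, p.2.1)

theorem margX_swapYZ (Q : 𝒳 × 𝒴 × 𝒵 → ℝ) (x : 𝒳) : margX (swapYZ Q) x = margX Q x :=
  Finset.sum_comm

theorem miXY_swapYZ (Q : 𝒳 × 𝒴 × 𝒵 → ℝ) : miXY (swapYZ Q) = miXZ Q := by
  simp only [miXY, margX_swapYZ]
  rfl

theorem miXZ_swapYZ (Q : 𝒳 × 𝒴 × 𝒵 → ℝ) : miXZ (swapYZ Q) = miXY Q := by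
  simp only [miXZ, margX_swapYZ]
  rfl

theorem miXYZ_swapYZ (Q : 𝒳 × 𝒴 × 𝒵 → ℝ) : miXYZ (swapYZ Q) = miXYZ Q := by
  simp only [miXYZ, margX_swapYZ]
  exact Finset.sum_congr rfl fun _ _ => Finset.sum_comm

theorem miXY_Z_swapYZ (Q : 𝒳 × 𝒴 × 𝒵 → ℝ) : miXY_Z (swapYZ Q) = miXZ_Y Q :=
  Finset.sum_congr rfl fun _ _ => Finset.sum_comm

section Nonneg

variable {Q : 𝒳 × 𝒴 × 𝒵 → ℝ}

theorem margXZ_nonneg (hQ : ∀ p, 0 ≤ Q p) (x : 𝒳) (z : 𝒵) : 0 ≤ margXZ Q x z :=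
  Finset.sum_nonneg fun _ _ => hQ _

theorem margYZ_nonneg (hQ : ∀ p, 0 ≤ Q p) (y : 𝒴) (z : 𝒵) : 0 ≤ margYZ Q y z :=
  Finset.sum_nonneg fun _ _ => hQ _

theorem le_margXZ (hQ : ∀ p, 0 ≤ Q p) (x : 𝒳) (y : 𝒴) (z : 𝒵) : Q (x, y, z) ≤ margXZ Q x z :=
  Finset.single_le_sum (f := fun y => Q (x, y, z)) (fun _ _ => hQ _) (Finset.mem_univ y)

theorem le_margYZ (hQ : ∀ p, 0 ≤ Q p) (x : 𝒳) (y : 𝒴) (z : 𝒵) : Q (x, y, z) ≤ margYZ Q y z :=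
  Finset.single_le_sum (f := fun x => Q (x, y, z)) (fun _ _ => hQ _) (Finset.mem_univ x)

theorem margXZ_le_margZ (hQ : ∀ p, 0 ≤ Q p) (x : 𝒳) (z : 𝒵) : margXZ Q x z ≤ margZ Q z :=
  Finset.single_le_sum (f := fun x => margXZ Q x z) (fun _ _ => margXZ_nonneg hQ _ _)
    (Finset.mem_univ x)

theorem margXZ_le_margX (hQ : ∀ p, 0 ≤ Q p) (x : 𝒳) (z : 𝒵) : margXZ Q x z ≤ margX Q x := by
  rw [← sum_margXZ']
  exact Finset.single_le_sum (f := fun z => margXZ Q x z) (fun _ _ => margXZ_nonneg hQ _ _)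
    (Finset.mem_univ z)

/-- The termwise bound `q log (q c / (a b)) ≥ q - a b / c`, which is `log t ≥ 1 - 1/t` scaled by
`q` when `q > 0`. -/
theorem sub_le_mul_log {q a b c : ℝ} (hq : 0 ≤ q) (ha : q ≤ a) (hb : q ≤ b) (hc : a ≤ c) :
    q - a * b / c ≤ q * Real.log (q * c / (a * b)) := by
  rcases hq.eq_or_lt with rfl | hq
  · have : 0 ≤ a * b / c := by
      have := ha.trans hc
      positivity
    linarith [zero_mul (Real.log (0 * c / (a * b)))]
  · have ha' := hq.trans_le ha
    have hb' := hq.trans_le hb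
    have hc' := ha'.trans_le hc
    have h := mul_le_mul_of_nonneg_left
      (Real.one_sub_inv_le_log_of_pos (x := q * c / (a * b)) (by positivity)) hq.le
    have e : q * (1 - (q * c / (a * b))⁻¹) = q - a * b / c := by field_simp
    linarith

/-- The subtracted terms of `sub_le_mul_log` have the same total mass as `Q`. -/
theorem sum_condProd (Q : 𝒳 × 𝒴 × 𝒵 → ℝ) :
    ∑ x, ∑ y, ∑ z, margXZ Q x z * margYZ Q y z / margZ Q z = ∑ x, ∑ y, ∑ z, Q (x, y, z) := by
  have h1 : ∀ x, ∑ y, ∑ z, margXZ Q x z * margYZ Q y z / margZ Q z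
      = ∑ z, margXZ Q x z * margZ Q z / margZ Q z := fun x => by
    rw [Finset.sum_comm]
    refine Finset.sum_congr rfl fun z _ => ?_
    rw [← Finset.sum_div, ← Finset.mul_sum, sum_margYZ]
  have h2 : ∀ x, ∑ y, ∑ z, Q (x, y, z) = ∑ z, margXZ Q x z := fun x => Finset.sum_comm
  simp_rw [h1, h2]
  rw [Finset.sum_comm, Finset.sum_comm (f := fun x z => margXZ Q x z)]
  refine Finset.sum_congr rfl fun z _ => ?_
  rw [← Finset.sum_div, ← Finset.sum_mul, sum_margXZ, mul_self_div_self]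

theorem miXY_Z_nonneg (hQ : ∀ p, 0 ≤ Q p) : 0 ≤ miXY_Z Q := by
  have h : ∑ x, ∑ y, ∑ z, (Q (x, y, z) - margXZ Q x z * margYZ Q y z / margZ Q z) ≤ miXY_Z Q :=
    Finset.sum_le_sum fun x _ => Finset.sum_le_sum fun y _ => Finset.sum_le_sum fun z _ =>
      sub_le_mul_log (hQ _) (le_margXZ hQ x y z) (le_margYZ hQ x y z) (margXZ_le_margZ hQ x z)
  simp only [Finset.sum_sub_distrib, sum_condProd, sub_self] at h
  exact h

theorem miXYZ_eq (hQ : ∀ p, 0 ≤ Q p) : miXYZ Q = miXZ Q + miXY_Z Q := by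
  have h : miXZ Q = ∑ x, ∑ y, ∑ z, Q (x, y, z) *
      Real.log (margXZ Q x z / (margX Q x * margZ Q z)) := by
    refine Finset.sum_congr rfl fun x _ => ?_
    rw [Finset.sum_comm]
    refine Finset.sum_congr rfl fun z _ => ?_
    rw [← Finset.sum_mul]
    rfl
  rw [h]
  unfold miXYZ miXY_Z
  simp only [← Finset.sum_add_distrib]
  refine Finset.sum_congr rfl fun x _ => Finset.sum_congr rfl fun y _ =>
    Finset.sum_congr rfl fun z _ => ?_
  rcases (hQ (x, y, z)).eq_or_lt with h0 | h0
  · simp [← h0]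
  · have ha := h0.trans_le (le_margXZ hQ x y z)
    have hb := h0.trans_le (le_margYZ hQ x y z)
    have hc := ha.trans_le (margXZ_le_margZ hQ x z)
    have hx := ha.trans_le (margXZ_le_margX hQ x z)
    rw [← mul_add, ← Real.log_mul (by positivity) (by positivity)]
    congr 2
    field_simp

/-- The chain rule with `Y` and `Z` exchanged. -/
theorem miXYZ_eq' (hQ : ∀ p, 0 ≤ Q p) : miXYZ Q = miXY Q + miXZ_Y Q := by
  have h := miXYZ_eq (Q := swapYZ Q) fun _ => hQ _
  rwa [miXYZ_swapYZ, miXZ_swapYZ, miXY_Z_swapYZ] at h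

theorem miXZ_Y_nonneg (hQ : ∀ p, 0 ≤ Q p) : 0 ≤ miXZ_Y Q := by
  rw [← miXY_Z_swapYZ]
  exact miXY_Z_nonneg fun _ => hQ _

end Nonneg

theorem miXY_congr {P Q : 𝒳 × 𝒴 × 𝒵 → ℝ} (h : ∀ x y, margXY Q x y = margXY P x y) :
    miXY Q = miXY P := by
  have hx : ∀ x, margX Q x = margX P x := fun x => Finset.sum_congr rfl fun y _ => h x y
  have hy : ∀ y, margY Q y = margY P y := fun y => Finset.sum_congr rfl fun x _ => h x y
  simp only [miXY, h, hx, hy]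

theorem miXZ_congr {P Q : 𝒳 × 𝒴 × 𝒵 → ℝ} (h : ∀ x z, margXZ Q x z = margXZ P x z) :
    miXZ Q = miXZ P := by
  rw [← miXY_swapYZ, ← miXY_swapYZ]
  exact miXY_congr h

/-- bounds `S̃I(X:Y;Z) ≤ MI(X:Y)`, `C̃I(X:Y;Z) ≤ MI(X:Y|Z)` and
`ŨI(X:Y∖Z) ≥ MI(X:Y) − MI(X:Z)`. -/
theorem stmt10 [Nonempty 𝒳] [Nonempty 𝒴] [Nonempty 𝒵]
    (P : 𝒳 × 𝒴 × 𝒵 → ℝ) (hP : IsDist P) :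
    SI P ≤ miXY P ∧ CI P ≤ miXY_Z P ∧ miXY P - miXZ P ≤ UIY P := by
  have hne : (ΔP P).Nonempty := ⟨P, hP, fun _ _ => rfl, fun _ _ => rfl⟩
  refine ⟨?_, ?_, ?_⟩
  · refine csSup_le (hne.image _) ?_
    rintro _ ⟨Q, ⟨hQ, hxy, -⟩, rfl⟩
    have := miXY_Z_nonneg hQ.1
    rw [coI, miXY_congr hxy]
    linarith
  · -- By the chain rule for `P`, the claim is that `MI_P(X:Z)` bounds the infimum from below.
    have h : miXZ P ≤ sInf (miXYZ '' ΔP P) := by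
      refine le_csInf (hne.image _) ?_
      rintro _ ⟨Q, ⟨hQ, -, hxz⟩, rfl⟩
      rw [miXYZ_eq hQ.1, miXZ_congr hxz]
      linarith [miXY_Z_nonneg hQ.1]
    rw [CI, miXYZ_eq hP.1]
    linarith
  · refine le_csInf (hne.image _) ?_
    rintro _ ⟨Q, ⟨hQ, hxy, hxz⟩, rfl⟩
    rw [← miXY_congr hxy, ← miXZ_congr hxz]
    linarith [miXYZ_eq hQ.1, miXYZ_eq' hQ.1, miXZ_Y_nonneg hQ.1]

end PID
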